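/- arXiv:1306.5880 — 2 statements merged into one kernel-verified Lean document; each statement's English description precedes it below -/
import Mathlib

section
/- Let p, q > 2 be real numbers with log p / log q = n₀/m₀ where n₀, m₀ are coprime positive integers (so that p^{m₀} = q^{n₀}), set α = 1/p, β = 1/q, and let λ be a nonzero real number. For each a = (a₀,…,a_{m₀−1}) ∈ {0,1}^{m₀} and b = (b₀,…,b_{n₀−1}) ∈ {0,1}^{n₀}, set a_λ(a,b) := −(p−1)·p^{m₀−1}·( ∑_{k=0}^{m₀−1} a_k·p^{−k} − (p(q−1))/(q(p−1)) · λ · ∑_{k=0}^{n₀−1} b_k·q^{−k} ), and define the contraction S_{a,b}(t) := p^{−m₀}·(t − a_λ(a,b)). Then C_α − λ·C_β is the attractor of the iterated function system {S_{a,b}}: it is the unique nonempty compact subset D of ℝ satisfying D = ⋃_{a ∈ {0,1}^{m₀}, b ∈ {0,1}^{n₀}} S_{a,b}(D). -/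
/-!
A point of `C_α` is `(1 - α) ∑ εₖ αᵏ`. Cutting the digit sequence `ε` after `m` digits writes it as
`(1 - α) ∑_{k < m} εₖ αᵏ + α ^ m x'`, where `x' ∈ C_α` has the shifted digits
(`cantorPoint_split`). Doing this with `m₀` digits in `C_α` and `n₀` digits in `C_β`, the two scaling
factors agree because `p ^ m₀ = q ^ n₀`, and the resulting affine map of `x' - λ y'` is exactly
`S_{a,b}` for the leading digits `a`, `b` (`contraction_cantorPoint`). As arbitrary leading blocks
and tails can be joined, this gives the self-similarity of `C_α - λ C_β`.

Compactness holds since `C_α - λ C_β` is a continuous image of the compact space of pairs of digit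
sequences. Uniqueness is that of the attractor of a family of contractions (`attractor_subset`): if
`D` and `E` are both invariant, the point of `D` farthest from `E` is the image of a point of `D`, so
its distance to `E` is at most `r < 1` times the maximal distance, which must therefore vanish.
-/

open Set

/-- The middle Cantor set `C_a`, for `0 < a < 1/2`:
`C_a = { (1-a) * ∑ εₖ aᵏ : εₖ ∈ {0,1} }`. -/
noncomputable def middleCantor (a : ℝ) : Set ℝ :=
  {x : ℝ | ∃ ε : ℕ → Bool, x = (1 - a) * ∑' k : ℕ, (if ε k then a ^ k else 0)}

/-- The arithmetic difference `C_a - l · C_b`. -/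
noncomputable def diffSet (a b l : ℝ) : Set ℝ :=
  {z : ℝ | ∃ x ∈ middleCantor a, ∃ y ∈ middleCantor b, z = x - l * y}

/-- The translation part
`a_λ(a,b) = -(p-1) p^(m₀-1) (∑ aₖ p^(-k) - (p(q-1))/(q(p-1)) · λ · ∑ bₖ q^(-k))`. -/
noncomputable def coeffA (p q l : ℝ) (m₀ n₀ : ℕ)
    (a : Fin m₀ → Bool) (b : Fin n₀ → Bool) : ℝ :=
  -(p - 1) * p ^ (m₀ - 1) *
    ((∑ k : Fin m₀, (if a k then (1 : ℝ) else 0) / p ^ (k : ℕ)) -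
      (p * (q - 1)) / (q * (p - 1)) * l *
        ∑ k : Fin n₀, (if b k then (1 : ℝ) else 0) / q ^ (k : ℕ))

/-- The contraction `S_{a,b}(t) = p^(-m₀) (t - a_λ(a,b))`. -/
noncomputable def contraction (p q l : ℝ) (m₀ n₀ : ℕ)
    (a : Fin m₀ → Bool) (b : Fin n₀ → Bool) (t : ℝ) : ℝ :=
  (p ^ m₀)⁻¹ * (t - coeffA p q l m₀ n₀ a b)

/-- The point of `C_a` with digit sequence `ε`. -/
noncomputable def cantorPoint (a : ℝ) (ε : ℕ → Bool) : ℝ :=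
  (1 - a) * ∑' k : ℕ, (if ε k then a ^ k else 0)

/-- The digit sequence that begins with the block `a` and continues with `ε`. -/
def joinDigits {m : ℕ} (a : Fin m → Bool) (ε : ℕ → Bool) (k : ℕ) : Bool :=
  if h : k < m then a ⟨k, h⟩ else ε (k - m)

lemma mem_diffSet {a b l z : ℝ} :
    z ∈ diffSet a b l ↔ ∃ ε δ : ℕ → Bool, z = cantorPoint a ε - l * cantorPoint b δ := by
  constructor
  · rintro ⟨x, ⟨ε, rfl⟩, y, ⟨δ, rfl⟩, rfl⟩
    exact ⟨ε, δ, rfl⟩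
  · rintro ⟨ε, δ, rfl⟩
    exact ⟨_, ⟨ε, rfl⟩, _, ⟨δ, rfl⟩, rfl⟩

lemma digit_norm_le {a : ℝ} (ha : 0 ≤ a) (c : Bool) (k : ℕ) :
    ‖(if c then a ^ k else 0 : ℝ)‖ ≤ a ^ k := by
  have := pow_nonneg ha k
  cases c <;> simp [abs_of_nonneg ha, this]

lemma summable_digits {a : ℝ} (ha : 0 ≤ a) (ha1 : a < 1) (ε : ℕ → Bool) :
    Summable (fun k => (if ε k then a ^ k else 0 : ℝ)) :=
  Summable.of_norm_bounded (summable_geometric_of_lt_one ha ha1)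
    (fun k => digit_norm_le ha (ε k) k)

lemma cantorPoint_split {a : ℝ} (ha : 0 ≤ a) (ha1 : a < 1) (ε : ℕ → Bool) (m : ℕ) :
    cantorPoint a ε = (1 - a) * (∑ k : Fin m, (if ε k then a ^ (k : ℕ) else 0)) +
      a ^ m * cantorPoint a (fun k => ε (k + m)) := by
  have h := (summable_digits ha ha1 ε).sum_add_tsum_nat_add m
  have h2 : ∑' k, (if ε (k + m) then a ^ (k + m) else 0 : ℝ)
      = a ^ m * ∑' k, (if ε (k + m) then a ^ k else 0 : ℝ) := by
    rw [← tsum_mul_left]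
    refine tsum_congr fun k => ?_
    split_ifs <;> ring
  unfold cantorPoint
  rw [← h, h2, Fin.sum_univ_eq_sum_range (fun k => (if ε k then a ^ k else 0 : ℝ))]
  ring

lemma continuous_cantorPoint {a : ℝ} (ha : 0 ≤ a) (ha1 : a < 1) :
    Continuous (cantorPoint a) := by
  refine continuous_const.mul (continuous_tsum (fun k => ?_)
    (summable_geometric_of_lt_one ha ha1) (fun k ε => digit_norm_le ha (ε k) k))
  exact (continuous_of_discreteTopology (f := fun c : Bool => (if c then a ^ k else 0 : ℝ))).comp
    (continuous_apply k)

/-- `S_{a,b}` prepends the digit blocks `a` and `b` to the expansions of the two coordinates. -/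
lemma contraction_cantorPoint {p q l : ℝ} (hp : 2 < p) (hq : 2 < q) {m n : ℕ} (hm : 0 < m)
    (hpq : p ^ m = q ^ n) (ε δ : ℕ → Bool) :
    contraction p q l m n (fun k => ε k) (fun k => δ k)
      (cantorPoint (1 / p) (fun k => ε (k + m)) - l * cantorPoint (1 / q) (fun k => δ (k + n)))
      = cantorPoint (1 / p) ε - l * cantorPoint (1 / q) δ := by
  have inv_lt : ∀ x : ℝ, 2 < x → 0 ≤ 1 / x ∧ 1 / x < 1 := fun x hx =>
    ⟨by positivity, by rw [div_lt_one (by linarith)]; linarith⟩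
  rw [cantorPoint_split (inv_lt p hp).1 (inv_lt p hp).2 ε m,
    cantorPoint_split (inv_lt q hq).1 (inv_lt q hq).2 δ n]
  have digits : ∀ (x : ℝ) (N : ℕ) (γ : ℕ → Bool),
      ∑ k : Fin N, (if γ k then (1 / x) ^ (k : ℕ) else 0 : ℝ)
        = ∑ k : Fin N, (if γ k then (1 : ℝ) else 0) / x ^ (k : ℕ) := by
    intro x N γ
    refine Finset.sum_congr rfl fun k _ => ?_
    split_ifs <;> simp
  rw [digits, digits]
  unfold contraction coeffA
  generalize (∑ k : Fin m, (if ε k then (1 : ℝ) else 0) / p ^ (k : ℕ)) = A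
  generalize (∑ k : Fin n, (if δ k then (1 : ℝ) else 0) / q ^ (k : ℕ)) = B
  generalize cantorPoint (1 / p) _ = X
  generalize cantorPoint (1 / q) _ = Y
  rw [one_div_pow, one_div_pow, ← hpq]
  obtain ⟨m, rfl⟩ : ∃ m', m = m' + 1 := ⟨m - 1, by omega⟩
  have h0 : p ≠ 0 := by linarith
  have h1 : q ≠ 0 := by linarith
  have h2 : p - 1 ≠ 0 := by linarith
  rw [Nat.add_sub_cancel, pow_succ]
  field_simp
  ring

/-- For maps with a common contraction ratio `r < 1`, a compact set covered by its own images lies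
in every nonempty closed set that the maps send into itself. -/
lemma attractor_subset {ι X : Type*} [PseudoMetricSpace X] (f : ι → X → X) {r : ℝ}
    (hr0 : 0 ≤ r) (hr : r < 1)
    (hf : ∀ i x y, dist (f i x) (f i y) ≤ r * dist x y) {D E : Set X}
    (hD : IsCompact D) (hE : IsClosed E) (hEne : E.Nonempty)
    (hDf : D ⊆ ⋃ i, f i '' D) (hEf : ∀ i, ∀ y ∈ E, f i y ∈ E) : D ⊆ E := by
  intro x hx
  obtain ⟨x₀, hx₀, hmax⟩ := hD.exists_isMaxOn ⟨x, hx⟩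
    (Metric.continuous_infDist_pt E).continuousOn
  obtain ⟨i, x₁, hx₁, hi⟩ := mem_iUnion.1 (hDf hx₀)
  have step : Metric.infDist x₀ E ≤ r * Metric.infDist x₁ E := by
    refine le_of_forall_pos_lt_add fun e he => ?_
    obtain ⟨y, hy, hlt⟩ := (Metric.infDist_lt_iff hEne).1
      (lt_add_of_pos_right (Metric.infDist x₁ E) he)
    have h1 : Metric.infDist x₀ E ≤ dist x₀ (f i y) := Metric.infDist_le_dist_of_mem (hEf i y hy)
    have h2 := hf i x₁ y
    rw [hi] at h2
    nlinarith
  have h1 : Metric.infDist x₁ E ≤ Metric.infDist x₀ E := hmax hx₁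
  have h2 : Metric.infDist x E ≤ Metric.infDist x₀ E := hmax hx
  have h3 : 0 ≤ Metric.infDist x E := Metric.infDist_nonneg
  have h4 : 0 ≤ Metric.infDist x₀ E := Metric.infDist_nonneg
  have h5 : 0 ≤ Metric.infDist x₁ E := Metric.infDist_nonneg
  rw [hE.mem_iff_infDist_zero hEne]
  nlinarith

theorem stmt1 (p q : ℝ) (hp : 2 < p) (hq : 2 < q) (n₀ m₀ : ℕ)
    (hn₀ : 0 < n₀) (hm₀ : 0 < m₀) (hcop : Nat.Coprime n₀ m₀)
    (hratio : Real.log p / Real.log q = (n₀ : ℝ) / (m₀ : ℝ))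
    (l : ℝ) (hl : l ≠ 0) :
    ((diffSet (1 / p) (1 / q) l).Nonempty ∧ IsCompact (diffSet (1 / p) (1 / q) l) ∧
      diffSet (1 / p) (1 / q) l =
        ⋃ (a : Fin m₀ → Bool) (b : Fin n₀ → Bool),
          contraction p q l m₀ n₀ a b '' diffSet (1 / p) (1 / q) l) ∧
    ∀ D : Set ℝ, D.Nonempty → IsCompact D →
      D = (⋃ (a : Fin m₀ → Bool) (b : Fin n₀ → Bool), contraction p q l m₀ n₀ a b '' D) →
      D = diffSet (1 / p) (1 / q) l := by
  have hp0 : 0 < Real.log p := Real.log_pos (by linarith)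
  have hq0 : 0 < Real.log q := Real.log_pos (by linarith)
  have hpq : p ^ m₀ = q ^ n₀ := by
    have hm : (m₀ : ℝ) ≠ 0 := by positivity
    apply Real.log_injOn_pos (mem_Ioi.2 (by positivity)) (mem_Ioi.2 (by positivity))
    rw [Real.log_pow, Real.log_pow]
    rw [div_eq_div_iff hq0.ne' hm] at hratio
    linarith
  have inv_lt : ∀ x : ℝ, 2 < x → 0 ≤ 1 / x ∧ 1 / x < 1 := fun x hx =>
    ⟨by positivity, by rw [div_lt_one (by linarith)]; linarith⟩
  have hne : (diffSet (1 / p) (1 / q) l).Nonempty :=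
    ⟨_, mem_diffSet.2 ⟨fun _ => false, fun _ => false, rfl⟩⟩
  have hcomp : IsCompact (diffSet (1 / p) (1 / q) l) := by
    have : diffSet (1 / p) (1 / q) l = range (fun w : (ℕ → Bool) × (ℕ → Bool) =>
        cantorPoint (1 / p) w.1 - l * cantorPoint (1 / q) w.2) := by
      ext z
      rw [mem_diffSet]
      simp [eq_comm]
    rw [this]
    exact isCompact_range
      (((continuous_cantorPoint (inv_lt p hp).1 (inv_lt p hp).2).comp continuous_fst).sub
      (continuous_const.mul
        ((continuous_cantorPoint (inv_lt q hq).1 (inv_lt q hq).2).comp continuous_snd)))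
  have hself : diffSet (1 / p) (1 / q) l =
        ⋃ (a : Fin m₀ → Bool) (b : Fin n₀ → Bool),
          contraction p q l m₀ n₀ a b '' diffSet (1 / p) (1 / q) l := by
    ext z
    simp only [mem_iUnion, mem_image]
    constructor
    · intro hz
      obtain ⟨ε, δ, rfl⟩ := mem_diffSet.1 hz
      exact ⟨_, _, _, mem_diffSet.2 ⟨_, _, rfl⟩, contraction_cantorPoint hp hq hm₀ hpq ε δ⟩
    · rintro ⟨a, b, t, ht, rfl⟩
      obtain ⟨ε, δ, rfl⟩ := mem_diffSet.1 ht
      have h := contraction_cantorPoint (l := l) hp hq hm₀ hpq (joinDigits a ε) (joinDigits b δ)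
      simp only [joinDigits, Fin.is_lt, dite_true, Fin.eta, Nat.not_lt.2 (Nat.le_add_left _ _),
        dite_false, Nat.add_sub_cancel] at h
      exact mem_diffSet.2 ⟨_, _, h⟩
  refine ⟨⟨hne, hcomp, hself⟩, fun D hDne hD hDself => ?_⟩
  let f : (Fin m₀ → Bool) × (Fin n₀ → Bool) → ℝ → ℝ := fun w => contraction p q l m₀ n₀ w.1 w.2
  have hf : ∀ i x y, dist (f i x) (f i y) ≤ (p ^ m₀)⁻¹ * dist x y := by
    intro i x y
    have : 0 ≤ (p ^ m₀)⁻¹ := by positivity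
    simp only [f, contraction, Real.dist_eq, ← mul_sub, abs_mul, abs_of_nonneg this,
      sub_sub_sub_cancel_right, le_refl]
  have hr : (p ^ m₀)⁻¹ < 1 := inv_lt_one_of_one_lt₀ (one_lt_pow₀ (by linarith) hm₀.ne')
  have sub : ∀ F : Set ℝ,
      F = (⋃ (a : Fin m₀ → Bool) (b : Fin n₀ → Bool), contraction p q l m₀ n₀ a b '' F) →
      F ⊆ ⋃ i, f i '' F := by
    intro F hF z hz
    rw [hF] at hz
    simp only [mem_iUnion] at hz ⊢
    obtain ⟨a, b, h⟩ := hz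
    exact ⟨(a, b), h⟩
  have inv : ∀ F : Set ℝ,
      F = (⋃ (a : Fin m₀ → Bool) (b : Fin n₀ → Bool), contraction p q l m₀ n₀ a b '' F) →
      ∀ i, ∀ y ∈ F, f i y ∈ F := by
    intro F hF i y hy
    rw [hF]
    simp only [mem_iUnion]
    exact ⟨i.1, i.2, y, hy, rfl⟩
  have hr0 : 0 ≤ (p ^ m₀)⁻¹ := by positivity
  exact Subset.antisymm
    (attractor_subset f hr0 hr hf hD hcomp.isClosed hne (sub _ hDself) (inv _ hself))
    (attractor_subset f hr0 hr hf hcomp hD.isClosed hDne (sub _ hself) (inv _ hDself))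
end

section
/- Let 0 < α < 1/2 and 0 < β < 1/2 with τ(C_α)·τ(C_β) < 1. If log α / log β is irrational, then for every real number λ, C_α − λ·C_β ≠ [−λ, 1]. -/
/-!
Write `u = 1 - x`; since `C_α` is symmetric about `1/2`, a point `1 - s` lies in `C_α - l C_β` iff
`s = u + l y` for some `u ∈ C_α`, `y ∈ C_β`. An element of `C_a` smaller than `a ^ m * (1 - a)` is
at most `a ^ (m + 1)` (`middleCantor_gap`). Hence, for `l > 0`, no `s` with
`α ^ (m + 1) + l β ^ (n + 1) < s < min (α ^ m (1 - α)) (l β ^ n (1 - β))` is of this form.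
With `r = l β ^ n / α ^ m`, this range is nonempty iff `α / (1 - 2β) < r < (1 - 2α) / β`. The
thickness hypothesis says exactly that this interval for `r` is nonempty, and irrationality of
`log α / log β` provides natural numbers `m`, `n` putting `r` in it
(`exists_nat_mul_sub_mem_Ioo`). For `l ≤ 0` the claim is elementary: if `l < 0` then `0` is a
difference outside `[-l, 1]`, and if `l = 0` the central gap of `C_α` is missed.
-/

open Set MeasureTheory

theorem summable_cantor_digits {a : ℝ} (h0 : 0 < a) (h1 : a < 1) (ε : ℕ → Bool) :
    Summable fun k : ℕ => if ε k then a ^ k else 0 := by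
  refine Summable.of_nonneg_of_le (fun k => ?_) (fun k => ?_)
    (summable_geometric_of_lt_one h0.le h1)
  · split_ifs <;> positivity
  · split_ifs
    · exact le_rfl
    · positivity

theorem middleCantor_nonneg {a x : ℝ} (h0 : 0 < a) (h1 : a < 1) (hx : x ∈ middleCantor a) :
    0 ≤ x := by
  obtain ⟨ε, rfl⟩ := hx
  refine mul_nonneg (by linarith) (tsum_nonneg fun k => ?_)
  split_ifs <;> positivity

theorem zero_mem_middleCantor (a : ℝ) : (0 : ℝ) ∈ middleCantor a :=
  ⟨fun _ => false, by simp⟩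

/-- `C_a` is symmetric about `1/2`: flip all digits. -/
theorem one_sub_mem_middleCantor {a x : ℝ} (h0 : 0 < a) (h1 : a < 1) (hx : x ∈ middleCantor a) :
    1 - x ∈ middleCantor a := by
  obtain ⟨ε, rfl⟩ := hx
  refine ⟨fun k => !ε k, ?_⟩
  have h : (∑' k : ℕ, if ε k then a ^ k else 0) + (∑' k : ℕ, if (!ε k) then a ^ k else 0)
      = (1 - a)⁻¹ := by
    rw [← (summable_cantor_digits h0 h1 ε).tsum_add
      (summable_cantor_digits h0 h1 fun k => !ε k), ← tsum_geometric_of_lt_one h0.le h1]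
    refine tsum_congr fun k => ?_
    cases ε k <;> simp
  have h2 : (1 - a) * (1 - a)⁻¹ = 1 := mul_inv_cancel₀ (by linarith)
  rw [← h, mul_add] at h2
  linarith

/-- `C_a` has no point in the open gap between `a ^ (m + 1)` and `a ^ m * (1 - a)`: below the gap,
the digits `0, …, m` all vanish. -/
theorem middleCantor_gap {a x : ℝ} (h0 : 0 < a) (h1 : a < 1) (hx : x ∈ middleCantor a) (m : ℕ)
    (hxm : x < a ^ m * (1 - a)) : x ≤ a ^ (m + 1) := by
  obtain ⟨ε, rfl⟩ := hx
  have hs := summable_cantor_digits h0 h1 ε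
  have hnn : ∀ k, (0 : ℝ) ≤ if ε k then a ^ k else 0 := fun k => by split_ifs <;> positivity
  have h1a : 0 < 1 - a := by linarith
  have hlt : (∑' k : ℕ, if ε k then a ^ k else 0) < a ^ m := by
    rw [mul_comm (a ^ m)] at hxm
    exact lt_of_mul_lt_mul_left hxm h1a.le
  have hzero : ∀ k ∈ Finset.range (m + 1), (if ε k then a ^ k else 0) = 0 := by
    intro k hk
    by_contra hne
    have hk' : ε k = true := by
      by_contra hf
      simp [hf] at hne
    have h2 := hs.le_tsum k fun j _ => hnn j
    rw [if_pos hk'] at h2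
    have h3 : a ^ m ≤ a ^ k :=
      pow_le_pow_of_le_one h0.le h1.le (by simp at hk; omega)
    linarith
  have htail : (∑' k : ℕ, if ε k then a ^ k else 0) ≤ a ^ (m + 1) * (1 - a)⁻¹ := by
    rw [← hs.sum_add_tsum_nat_add (m + 1), Finset.sum_eq_zero hzero, zero_add,
      ← tsum_geometric_of_lt_one h0.le h1, ← tsum_mul_left]
    refine ((summable_nat_add_iff (m + 1)).2 hs).tsum_le_tsum (fun k => ?_)
      ((summable_geometric_of_lt_one h0.le h1).mul_left _)
    split_ifs
    · rw [← pow_add, add_comm]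
    · positivity
  calc _ ≤ (1 - a) * (a ^ (m + 1) * (1 - a)⁻¹) := by gcongr
    _ = a ^ (m + 1) := by field_simp

/-- Density of `{m a - n p : m, n ∈ ℕ}` for positive `a`, `p` with irrational ratio: the natural
multiples of `a` are dense in the circle `ℝ / pℤ`. -/
theorem exists_nat_mul_sub_mem_Ioo {a p : ℝ} (ha : 0 < a) (hp : 0 < p) (hirr : Irrational (a / p))
    {x y : ℝ} (hxy : x < y) : ∃ m n : ℕ, m * a - n * p ∈ Ioo x y := by
  have : Fact (0 < p) := ⟨hp⟩
  have hd : DenseRange (· • (a : AddCircle p) : ℕ → AddCircle p) :=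
    denseRange_zsmul_iff_nsmul.1 (AddCircle.denseRange_zsmul_coe_iff.2 hirr)
  -- Shifting the target by `N a > y` forces the multiple of `p` to be subtracted to be positive.
  obtain ⟨N, hN⟩ := exists_nat_gt (y / a)
  rw [div_lt_iff₀ ha] at hN
  have hopen : IsOpen ((fun t : ℝ => (t : AddCircle p)) '' Ioo (x - N * a) (y - N * a)) :=
    QuotientAddGroup.isOpenMap_coe _ isOpen_Ioo
  obtain ⟨k, t, ht, hkt⟩ := hd.exists_mem_open hopen
    ((nonempty_Ioo.2 (by linarith)).image _)
  have hkt' : ((t : ℝ) : AddCircle p) = ((k * a : ℝ) : AddCircle p) := by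
    rw [← nsmul_eq_mul, AddCircle.coe_nsmul]; exact hkt
  obtain ⟨j, hj⟩ := AddSubgroup.mem_zmultiples_iff.1 (QuotientAddGroup.eq.1 hkt')
  rw [zsmul_eq_mul] at hj
  have hka : 0 ≤ (k : ℝ) * a := by positivity
  have hjpos : 0 < (j : ℝ) := by
    refine pos_of_mul_pos_left (b := p) ?_ hp.le
    linarith [ht.2]
  lift j to ℕ using (by exact_mod_cast hjpos.le)
  rw [Int.cast_natCast] at hj
  refine ⟨k + N, j, ?_, ?_⟩ <;> push_cast <;> linarith [ht.1, ht.2]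

theorem stmt10 (α β : ℝ) (hα0 : 0 < α) (hα : α < 1 / 2) (hβ0 : 0 < β) (hβ : β < 1 / 2)
    (hτ : (α / (1 - 2 * α)) * (β / (1 - 2 * β)) < 1)
    (hirr : Irrational (Real.log α / Real.log β)) :
    ∀ l : ℝ, diffSet α β l ≠ Set.Icc (-l) 1 := by
  intro l heq
  have hα1 : α < 1 := by linarith
  have hβ1 : β < 1 := by linarith
  have hA : 0 < 1 - 2 * α := by linarith
  have hB : 0 < 1 - 2 * β := by linarith
  -- Points of the interval, seen from the right end point `1`.
  have key : ∀ s, 0 ≤ s → s ≤ 1 + l →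
      ∃ u ∈ middleCantor α, ∃ y ∈ middleCantor β, s = u + l * y := by
    intro s hs0 hs1
    have hmem : 1 - s ∈ diffSet α β l := by
      rw [heq]; exact ⟨by linarith, by linarith⟩
    obtain ⟨x, hx, y, hy, h⟩ := hmem
    exact ⟨1 - x, one_sub_mem_middleCantor hα0 hα1 hx, y, hy, by linarith⟩
  rcases lt_trichotomy l 0 with hl | rfl | hl
  · have hmem : (0 : ℝ) ∈ diffSet α β l :=
      ⟨0, zero_mem_middleCantor α, 0, zero_mem_middleCantor β, by simp⟩
    rw [heq] at hmem
    linarith [hmem.1]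
  · obtain ⟨u, hu, y, -, h⟩ := key (1 / 2) (by norm_num) (by norm_num)
    have := middleCantor_gap hα0 hα1 hu 0 (by rw [pow_zero]; linarith)
    rw [zero_add, pow_one] at this
    linarith
  · have hlo : 0 < α / (1 - 2 * β) := by positivity
    have hlohi : α / (1 - 2 * β) < (1 - 2 * α) / β := by
      rw [div_mul_div_comm, div_lt_one (by positivity)] at hτ
      rw [div_lt_div_iff₀ hB hβ0]
      exact hτ
    have hlogα : 0 < -Real.log α := by linarith [Real.log_neg hα0 hα1]
    have hlogβ : 0 < -Real.log β := by linarith [Real.log_neg hβ0 hβ1]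
    obtain ⟨m, n, hmn⟩ := exists_nat_mul_sub_mem_Ioo hlogα hlogβ
      (by rwa [neg_div_neg_eq])
      (sub_lt_sub_right (Real.log_lt_log hlo hlohi) (Real.log l))
    have hαm : 0 < α ^ m := by positivity
    have hβn : 0 < β ^ n := by positivity
    have hlog : Real.log (l * β ^ n / α ^ m)
        = Real.log l + (m * -Real.log α - n * -Real.log β) := by
      rw [Real.log_div (by positivity) (by positivity), Real.log_mul (by positivity)
        (by positivity), Real.log_pow, Real.log_pow]
      ring
    have hr1 : α / (1 - 2 * β) < l * β ^ n / α ^ m := by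
      rw [← Real.log_lt_log_iff hlo (by positivity), hlog]
      linarith [hmn.1]
    have hr2 : l * β ^ n / α ^ m < (1 - 2 * α) / β := by
      rw [← Real.log_lt_log_iff (by positivity) (by positivity), hlog]
      linarith [hmn.2]
    rw [div_lt_div_iff₀ hB hαm] at hr1
    rw [div_lt_div_iff₀ hαm hβ0] at hr2
    have hgap : α ^ (m + 1) + l * β ^ (n + 1)
        < min (α ^ m * (1 - α)) (l * (β ^ n * (1 - β))) := by
      rw [pow_succ, pow_succ]
      refine lt_min ?_ ?_ <;> nlinarith
    obtain ⟨s, hs1, hs2⟩ := exists_between hgap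
    obtain ⟨hs2, hs3⟩ := lt_min_iff.1 hs2
    have hs0 : 0 < s := lt_trans (by positivity) hs1
    have hs4 : s ≤ 1 + l := by
      have : α ^ m * (1 - α) ≤ 1 :=
        mul_le_one₀ (pow_le_one₀ hα0.le hα1.le) (by linarith) (by linarith)
      linarith
    obtain ⟨u, hu, y, hy, h⟩ := key s hs0.le hs4
    have hu0 := middleCantor_nonneg hα0 hα1 hu
    have hy0 := mul_nonneg hl.le (middleCantor_nonneg hβ0 hβ1 hy)
    have hu1 := middleCantor_gap hα0 hα1 hu m (by linarith)
    have hy1 := middleCantor_gap hβ0 hβ1 hy n (lt_of_mul_lt_mul_left (by linarith) hl.le)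
    have hy2 := mul_le_mul_of_nonneg_left hy1 hl.le
    linarith
end
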